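/- arXiv:2602.05051 — 2 statements merged into one kernel-verified Lean document; each statement's English description precedes it below -/
import Mathlib

section
/- Let E be a real inner product space, let l > 0, and let z, v ∈ E with ‖z‖ ≤ l. Define the projected Euler update z' as follows: if ‖z + v‖ ≤ l then z' = z + v; otherwise z' = (z + v) − ⟪v, n⟫ • n, where n = ‖z + v‖⁻¹ • (z + v). Then ‖z'‖ ≤ l. -/
open scoped RealInnerProductSpace Classical

theorem projected_euler_step_norm_le {E : Type*} [NormedAddCommGroup E]
    [InnerProductSpace ℝ E] (l : ℝ) (hl : 0 < l) (z v : E) (hz : ‖z‖ ≤ l) :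
    ‖if ‖z + v‖ ≤ l then z + v
      else (z + v) - ⟪v, ‖z + v‖⁻¹ • (z + v)⟫ • (‖z + v‖⁻¹ • (z + v))‖ ≤ l := by
  split_ifs with h
  · exact h
  · push Not at h
    have hw : 0 < ‖z + v‖ := hl.trans h
    set n : E := ‖z + v‖⁻¹ • (z + v) with hn
    have hn1 : ‖n‖ = 1 := by
      rw [hn, norm_smul, norm_inv, norm_norm, inv_mul_cancel₀ hw.ne']
    have hwn : z + v = ‖z + v‖ • n := by
      rw [hn, smul_smul, mul_inv_cancel₀ hw.ne', one_smul]
    have hin : ⟪z + v, n⟫ = ‖z + v‖ := by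
      rw [hn, real_inner_smul_right, real_inner_self_eq_norm_sq]
      field_simp
    have hz' : z + v - ⟪v, n⟫ • n = ⟪z, n⟫ • n := by
      rw [sub_eq_iff_eq_add, ← add_smul, ← inner_add_left, hin]
      exact hwn
    rw [hz', norm_smul, hn1, mul_one, Real.norm_eq_abs]
    have := abs_real_inner_le_norm z n
    rw [hn1, mul_one] at this
    exact this.trans hz
end

section
/- Let E be a real inner product space, let l > 0, let F : ℕ → E → E be an arbitrary family of update maps (the velocity increments), and let w ∈ E with ‖w‖ ≤ l. Define a sequence z : ℕ → E by z₀ = w and, for each k, letting v = F k (z k) and ẑ = z k + v: z_{k+1} = ẑ if ‖ẑ‖ ≤ l, and z_{k+1} = ẑ − ⟪v, n⟫ • n with n = ‖ẑ‖⁻¹ • ẑ otherwise. Then ‖z_k‖ ≤ l for every k ∈ ℕ; in particular every iterate of the reflected Euler scheme remains in the closed ball of radius l centered at the origin. -/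
open scoped RealInnerProductSpace Classical

theorem reflected_euler_iterates_norm_le {E : Type*} [NormedAddCommGroup E]
    [InnerProductSpace ℝ E] (l : ℝ) (hl : 0 < l) (F : ℕ → E → E)
    (w : E) (hw : ‖w‖ ≤ l) (z : ℕ → E) (hz0 : z 0 = w)
    (hstep : ∀ k : ℕ, z (k + 1) =
      if ‖z k + F k (z k)‖ ≤ l then z k + F k (z k)
      else (z k + F k (z k))
        - ⟪F k (z k), ‖z k + F k (z k)‖⁻¹ • (z k + F k (z k))⟫
            • (‖z k + F k (z k)‖⁻¹ • (z k + F k (z k)))) :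
    ∀ k : ℕ, ‖z k‖ ≤ l := by
  intro k
  induction k with
  | zero => rw [hz0]; exact hw
  | succ k ih =>
    rw [hstep k]
    split_ifs with h
    · exact h
    · generalize F k (z k) = v at h ⊢
      generalize z k = x at h ih ⊢
      have hpos : 0 < ‖x + v‖ := by linarith [not_le.mp h]
      have hy : x + v = ‖x + v‖ • (‖x + v‖⁻¹ • (x + v)) := by
        rw [smul_smul, mul_inv_cancel₀ hpos.ne', one_smul]
      have hn : ‖‖x + v‖⁻¹ • (x + v)‖ = 1 := by
        rw [norm_smul, norm_inv, norm_norm, inv_mul_cancel₀ hpos.ne']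
      have hin : ⟪x + v, ‖x + v‖⁻¹ • (x + v)⟫ = ‖x + v‖ := by
        rw [real_inner_smul_right, real_inner_self_eq_norm_sq]
        field_simp
      have key : (x + v) - ⟪v, ‖x + v‖⁻¹ • (x + v)⟫ • (‖x + v‖⁻¹ • (x + v))
          = ⟪x, ‖x + v‖⁻¹ • (x + v)⟫ • (‖x + v‖⁻¹ • (x + v)) := by
        rw [sub_eq_iff_eq_add, ← add_smul, ← inner_add_left, hin]
        exact hy
      rw [key, norm_smul, hn, mul_one]
      have := norm_inner_le_norm (𝕜 := ℝ) x (‖x + v‖⁻¹ • (x + v))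
      rw [hn, mul_one] at this
      exact this.trans ih
end
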